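/- arXiv:1508.05718 — 2 statements merged into one kernel-verified Lean document; each statement's English description precedes it below -/
import Mathlib

section
/- Let 𝒜 be a finite separating union-closed family with universe elements x₁,…,x_m in order of increasing frequency. For 1 ≤ i ≤ m define M_i = ⋃_{A∈𝒜, x_i∉A} A, and M₀ = ⋃_{A∈𝒜} A. Then {x_{i+1},…,x_m} ⊆ M_i for all 0 ≤ i ≤ m-1. -/
variable {α : Type*} [DecidableEq α]

def UnionClosed (𝒜 : Finset (Finset α)) : Prop :=
  ∀ A ∈ 𝒜, ∀ B ∈ 𝒜, A ∪ B ∈ 𝒜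

def Separating (𝒜 : Finset (Finset α)) : Prop :=
  ∀ x ∈ 𝒜.sup id, ∀ y ∈ 𝒜.sup id, x ≠ y →
    ∃ A ∈ 𝒜, (x ∈ A ∧ y ∉ A) ∨ (y ∈ A ∧ x ∉ A)

def freq (𝒜 : Finset (Finset α)) (x : α) : ℕ := (𝒜.filter (fun A => x ∈ A)).card

theorem mem_iff_mem_of_freq_le {𝒜 : Finset (Finset α)} {a b : α}
    (hba : ∀ A ∈ 𝒜, b ∈ A → a ∈ A) (hfreq : freq 𝒜 a ≤ freq 𝒜 b) :
    ∀ A ∈ 𝒜, (a ∈ A ↔ b ∈ A) := by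
  have hsub : 𝒜.filter (b ∈ ·) ⊆ 𝒜.filter (a ∈ ·) :=
    Finset.monotone_filter_right 𝒜 hba
  have heq : 𝒜.filter (b ∈ ·) = 𝒜.filter (a ∈ ·) := Finset.eq_of_subset_of_card_le hsub hfreq
  exact fun A hA => (Finset.filter_inj'.1 heq hA).symm

theorem Separating.eq_of_forall_mem_iff_mem {𝒜 : Finset (Finset α)} (hsep : Separating 𝒜)
    {a b : α} (ha : a ∈ 𝒜.sup id) (hb : b ∈ 𝒜.sup id) (hab : ∀ A ∈ 𝒜, (a ∈ A ↔ b ∈ A)) :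
    a = b := by
  by_contra hne
  obtain ⟨A, hA, ⟨haA, hbA⟩ | ⟨hbA, haA⟩⟩ := hsep a ha b hb hne
  · exact hbA ((hab A hA).1 haA)
  · exact haA ((hab A hA).2 hbA)

/- If every member containing `b` contained `a`, the frequency bound would force the members
containing `a` and those containing `b` to coincide, so no member could separate `a` from `b`. -/
theorem Separating.exists_mem_notMem_of_freq_le {𝒜 : Finset (Finset α)} (hsep : Separating 𝒜)
    {a b : α} (hb : b ∈ 𝒜.sup id) (hne : a ≠ b) (hfreq : freq 𝒜 a ≤ freq 𝒜 b) :
    ∃ A ∈ 𝒜, b ∈ A ∧ a ∉ A := by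
  by_contra! hba
  have ha : a ∈ 𝒜.sup id := by
    obtain ⟨B, hB, hbB⟩ := Finset.mem_sup.1 hb
    exact Finset.mem_sup.2 ⟨B, hB, hba B hB hbB⟩
  exact hne (hsep.eq_of_forall_mem_iff_mem ha hb (mem_iff_mem_of_freq_le hba hfreq))

theorem M_sets_contain_tail_general {𝒜 : Finset (Finset α)} (hsep : Separating 𝒜)
    {m : ℕ} {x : ℕ → α}
    (hmaps : Set.MapsTo x (Set.Icc 1 m) (𝒜.sup id : Finset α))
    (hinj : Set.InjOn x (Set.Icc 1 m))
    (hmono : ∀ i j, 1 ≤ i → i ≤ j → j ≤ m → freq 𝒜 (x i) ≤ freq 𝒜 (x j))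
    {M : ℕ → Finset α}
    (hM0 : M 0 = 𝒜.sup id)
    (hMi : ∀ i, 1 ≤ i → i ≤ m → M i = (𝒜.filter (fun A => x i ∉ A)).sup id)
    {i j : ℕ} (hij : i < j) (hjm : j ≤ m) : x j ∈ M i := by
  have hj : j ∈ Set.Icc 1 m := ⟨Nat.one_le_of_lt hij, hjm⟩
  have hxj : x j ∈ 𝒜.sup id := hmaps hj
  rcases Nat.eq_zero_or_pos i with rfl | hi
  · rwa [hM0]
  · have him : i ≤ m := hij.le.trans hjm
    have hne : x i ≠ x j := hinj.ne ⟨hi, him⟩ hj hij.ne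
    obtain ⟨A, hA, hjA, hiA⟩ :=
      hsep.exists_mem_notMem_of_freq_le hxj hne (hmono i j hi hij.le hjm)
    rw [hMi i hi him]
    exact Finset.mem_sup.2 ⟨A, Finset.mem_filter.2 ⟨hA, hiA⟩, hjA⟩

theorem M_sets_contain_tail (𝒜 : Finset (Finset α))
    (huc : UnionClosed 𝒜) (hsep : Separating 𝒜)
    (m : ℕ) (x : ℕ → α)
    (hbij : Set.BijOn x (Set.Icc 1 m) (𝒜.sup id : Finset α))
    (hmono : ∀ i j, 1 ≤ i → i ≤ j → j ≤ m → freq 𝒜 (x i) ≤ freq 𝒜 (x j))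
    (M : ℕ → Finset α)
    (hM0 : M 0 = 𝒜.sup id)
    (hMi : ∀ i, 1 ≤ i → i ≤ m → M i = (𝒜.filter (fun A => x i ∉ A)).sup id) :
    ∀ i ≤ m - 1, ∀ j, i < j → j ≤ m → x j ∈ M i :=
  fun _ _ _ hij hjm =>
    M_sets_contain_tail_general hsep hbij.mapsTo hbij.injOn hmono hM0 hMi hij hjm
end

section
/- Let 𝒜 be a finite separating union-closed family of finite sets whose universe has m elements, and suppose |𝒜| ≤ 2(m + m/(log₂(m) − log₂log₂(m))) with m ≥ 13. Then there exists an element x of the universe contained in at least |𝒜|/2 member sets of 𝒜. -/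
open Real

variable {α : Type*} [DecidableEq α]

/-!
Let `U` be the universe and consider the elements of `U` for which the subfamily of members through
them is maximal under inclusion. They meet every nonempty member; let `X` be an inclusion-minimal
set of them that still does, with `r` elements. By minimality every element of `X` is the whole
trace on `X` of some member, so by union-closure every nonempty `S ⊆ X` is the trace of a member.
By maximality, for `y ∈ U \ X` the union of the members avoiding `y` contains `X`, and separation
makes these unions distinct, so the trace `X` itself occurs at least `m - r + 1` times. Summing
`|X ∩ A| - 1` over the members `A` and counting incidences with `X` twice then shows that, if every
element of `X` lies in fewer than half of the `n` members, then with `q = r - 2 ≥ 1`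
`(n - 1) / 2 - m ≥ (m - 1) / q + 2 ^ (q + 1) - q - 3`. The right-hand side exceeds
`m / (log₂ m - log₂ log₂ m) - 1 / 2` for all `q` once `m ≥ 6`: for `q ≥ 2` this follows from
`2 ^ (log₂ m - log₂ log₂ m) = m / log₂ m`, and `q = 1` only needs `log₂ m - log₂ log₂ m ≥ 10 / 9`.
-/

section Family

open Finset

variable {𝒜 ℬ : Finset (Finset α)} {X S B : Finset α} {x y : α}

/-- The star of `x`: the subfamily of members of `𝒜` through `x`. -/
def membersContaining (𝒜 : Finset (Finset α)) (x : α) : Finset (Finset α) :=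
  𝒜.filter fun A => x ∈ A

lemma mem_membersContaining : B ∈ membersContaining 𝒜 x ↔ B ∈ 𝒜 ∧ x ∈ B :=
  mem_filter

lemma membersContaining_nonempty (hx : x ∈ 𝒜.sup id) : (membersContaining 𝒜 x).Nonempty := by
  obtain ⟨A, hA, hxA⟩ := mem_sup.1 hx
  exact ⟨A, mem_membersContaining.2 ⟨hA, hxA⟩⟩

lemma sum_card_inter_eq_sum_card_membersContaining (𝒜 : Finset (Finset α)) (X : Finset α) :
    ∑ A ∈ 𝒜, #(X ∩ A) = ∑ x ∈ X, #(membersContaining 𝒜 x) := by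
  simpa only [bipartiteAbove, bipartiteBelow, filter_mem_eq_inter, membersContaining] using
    (sum_card_bipartiteAbove_eq_sum_card_bipartiteBelow (s := X) (t := 𝒜) (· ∈ ·)).symm

lemma Separating.injOn_membersContaining (h : Separating 𝒜) :
    Set.InjOn (membersContaining 𝒜) (𝒜.sup id : Finset α) := by
  intro x hx y hy hxy
  by_contra hne
  obtain ⟨A, hA, ⟨hxA, hyA⟩ | ⟨hyA, hxA⟩⟩ := h x hx y hy hne
  · exact hyA (mem_membersContaining.1 (hxy ▸ mem_membersContaining.2 ⟨hA, hxA⟩)).2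
  · exact hxA (mem_membersContaining.1 (hxy ▸ mem_membersContaining.2 ⟨hA, hyA⟩)).2

lemma UnionClosed.sup_mem (h : UnionClosed 𝒜) (hℬ : ℬ ⊆ 𝒜) (hne : ℬ.Nonempty) :
    ℬ.sup id ∈ 𝒜 := by
  have hsup : SupClosed (𝒜 : Set (Finset α)) := fun A hA B hB => h A hA B hB
  rw [← sup'_eq_sup hne]
  exact hsup.finsetSup'_mem hne fun A hA => hℬ hA

/-- The union of the members of `𝒜` avoiding `x`. For union-closed `𝒜` it is the largest such
member, except that it is `∅`, possibly not a member, when every member contains `x`. -/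
def unionAvoiding (𝒜 : Finset (Finset α)) (x : α) : Finset α :=
  (𝒜.filter fun A => x ∉ A).sup id

lemma notMem_unionAvoiding :
    x ∉ unionAvoiding 𝒜 y ↔ membersContaining 𝒜 x ⊆ membersContaining 𝒜 y := by
  simp only [unionAvoiding, mem_sup, mem_filter, id, subset_iff, mem_membersContaining]
  grind

lemma notMem_unionAvoiding_self : x ∉ unionAvoiding 𝒜 x :=
  notMem_unionAvoiding.2 subset_rfl

lemma Separating.injOn_unionAvoiding (h : Separating 𝒜) :
    Set.InjOn (unionAvoiding 𝒜) (𝒜.sup id : Finset α) := by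
  intro x hx y hy hxy
  have hle : membersContaining 𝒜 x ⊆ membersContaining 𝒜 y :=
    notMem_unionAvoiding.1 (hxy ▸ notMem_unionAvoiding_self)
  have hge : membersContaining 𝒜 y ⊆ membersContaining 𝒜 x :=
    notMem_unionAvoiding.1 (hxy ▸ notMem_unionAvoiding_self)
  exact h.injOn_membersContaining hx hy (hle.antisymm hge)

lemma UnionClosed.unionAvoiding_mem (h : UnionClosed 𝒜) (hne : (unionAvoiding 𝒜 x).Nonempty) :
    unionAvoiding 𝒜 x ∈ 𝒜 := by
  refine h.sup_mem (filter_subset _ _) (nonempty_iff_ne_empty.2 fun hempty => ?_)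
  simp [unionAvoiding, hempty] at hne

lemma Separating.mem_unionAvoiding_of_maximalFor (h : Separating 𝒜)
    (hx : MaximalFor (· ∈ 𝒜.sup id) (membersContaining 𝒜) x) (hy : y ∈ 𝒜.sup id) (hxy : x ≠ y) :
    x ∈ unionAvoiding 𝒜 y := by
  by_contra hnot
  have hle := notMem_unionAvoiding.1 hnot
  exact hxy (h.injOn_membersContaining hx.prop hy (hle.antisymm (hx.2 hy hle)))

lemma exists_maximalFor_membersContaining_ge (hy : y ∈ 𝒜.sup id) :
    ∃ x, MaximalFor (· ∈ 𝒜.sup id) (membersContaining 𝒜) x ∧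
      membersContaining 𝒜 y ⊆ membersContaining 𝒜 x := by
  obtain ⟨x, hx, hmax⟩ := Finset.exists_maximalFor (membersContaining 𝒜)
    ((𝒜.sup id).filter fun z => membersContaining 𝒜 y ⊆ membersContaining 𝒜 z)
    ⟨y, by simp [hy]⟩
  obtain ⟨hxU, hyx⟩ := mem_filter.1 hx
  exact ⟨x, ⟨hxU, fun z hz hxz => hmax (mem_filter.2 ⟨hz, hyx.trans hxz⟩) hxz⟩, hyx⟩

/-- `X` is a transversal (hitting set) of `𝒜`: it meets every nonempty member. -/
def IsTransversal (𝒜 : Finset (Finset α)) (X : Finset α) : Prop :=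
  ∀ A ∈ 𝒜, A.Nonempty → (X ∩ A).Nonempty

lemma isTransversal_of_forall_maximalFor_mem
    (h : ∀ x, MaximalFor (· ∈ 𝒜.sup id) (membersContaining 𝒜) x → x ∈ X) :
    IsTransversal 𝒜 X := by
  rintro A hA ⟨y, hyA⟩
  obtain ⟨x, hx, hyx⟩ :=
    exists_maximalFor_membersContaining_ge (mem_sup.2 ⟨A, hA, hyA⟩ : y ∈ 𝒜.sup id)
  have hxA : x ∈ A := (mem_membersContaining.1 (hyx (mem_membersContaining.2 ⟨hA, hyA⟩))).2
  exact ⟨x, mem_inter.2 ⟨h x hx, hxA⟩⟩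

lemma exists_minimal_isTransversal_maximalFor (𝒜 : Finset (Finset α)) :
    ∃ X, Minimal (IsTransversal 𝒜) X ∧
      ∀ x ∈ X, MaximalFor (· ∈ 𝒜.sup id) (membersContaining 𝒜) x := by
  classical
  obtain ⟨X, hX, hmin⟩ := exists_minimal_le_of_wellFoundedLT (IsTransversal 𝒜)
    {x ∈ 𝒜.sup id | MaximalFor (· ∈ 𝒜.sup id) (membersContaining 𝒜) x}
    (isTransversal_of_forall_maximalFor_mem fun x hx => mem_filter.2 ⟨hx.prop, hx⟩)
  exact ⟨X, hmin, fun x hx => (mem_filter.1 (hX hx)).2⟩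

lemma IsTransversal.nonempty (h : IsTransversal 𝒜 X) (hU : (𝒜.sup id).Nonempty) :
    X.Nonempty := by
  obtain ⟨y, hy⟩ := hU
  obtain ⟨A, hA, hyA⟩ := mem_sup.1 hy
  exact (h A hA ⟨y, hyA⟩).mono inter_subset_left

lemma exists_inter_eq_singleton_of_minimal (h : Minimal (IsTransversal 𝒜) X) (hx : x ∈ X) :
    ∃ A ∈ 𝒜, X ∩ A = {x} := by
  have hnot : ¬ IsTransversal 𝒜 (X.erase x) := h.not_prop_of_lt (erase_ssubset hx)
  unfold IsTransversal at hnot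
  push Not at hnot
  obtain ⟨A, hA, hAne, hempty⟩ := hnot
  refine ⟨A, hA, (h.prop A hA hAne).subset_singleton_iff.1 ?_⟩
  rw [erase_inter, erase_eq_empty_iff] at hempty
  rcases hempty with hempty | hsingleton
  · simp [hempty]
  · exact hsingleton.subset

lemma UnionClosed.exists_inter_eq (h : UnionClosed 𝒜) (hX : ∀ x ∈ X, ∃ A ∈ 𝒜, X ∩ A = {x})
    (hS : S.Nonempty) (hSX : S ⊆ X) : ∃ A ∈ 𝒜, X ∩ A = S := by
  induction hS using Finset.Nonempty.cons_induction with
  | singleton a => exact hX a (hSX (mem_singleton_self a))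
  | cons a S ha _ ih =>
    obtain ⟨haX, hSX⟩ := insert_subset_iff.1 (cons_eq_insert a S ha ▸ hSX)
    obtain ⟨A, hA, hAS⟩ := ih hSX
    obtain ⟨C, hC, hCa⟩ := hX a haX
    exact ⟨C ∪ A, h C hC A hA, by rw [inter_union_distrib_left, hCa, hAS, cons_eq_insert]; rfl⟩

lemma UnionClosed.card_sdiff_lt_card_filter_inter_eq (h : UnionClosed 𝒜) (hsep : Separating 𝒜)
    (hX : ∀ x ∈ X, MaximalFor (· ∈ 𝒜.sup id) (membersContaining 𝒜) x) (hne : X.Nonempty) :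
    #(𝒜.sup id \ X) < #{A ∈ 𝒜 | X ∩ A = X} := by
  set U := 𝒜.sup id
  have hXU : X ⊆ U := fun x hx => (hX x hx).prop
  have hX_sub : ∀ y ∈ U \ X, X ⊆ unionAvoiding 𝒜 y := fun y hy x hx =>
    hsep.mem_unionAvoiding_of_maximalFor (hX x hx) (mem_sdiff.1 hy).1
      (ne_of_mem_of_not_mem hx (mem_sdiff.1 hy).2)
  have hU_notMem : U ∉ (U \ X).image (unionAvoiding 𝒜) := by
    intro hU
    obtain ⟨y, hy, hyU⟩ := mem_image.1 hU
    exact notMem_unionAvoiding_self (hyU ▸ (mem_sdiff.1 hy).1)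
  have hU_mem : U ∈ 𝒜 := by
    obtain ⟨x, hx⟩ := hne
    exact h.sup_mem subset_rfl ((membersContaining_nonempty (hXU hx)).mono (filter_subset _ _))
  calc #(U \ X) < #(insert U ((U \ X).image (unionAvoiding 𝒜))) := by
        rw [card_insert_of_notMem hU_notMem, card_image_of_injOn
          (hsep.injOn_unionAvoiding.mono (coe_subset.2 sdiff_subset))]
        exact Nat.lt_succ_self _
    _ ≤ #{A ∈ 𝒜 | X ∩ A = X} := by
        refine card_le_card (insert_subset (by simp [hU_mem, hXU]) (image_subset_iff.2 ?_))
        intro y hy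
        have hmem := h.unionAvoiding_mem (hne.mono (hX_sub y hy))
        simp [hmem, hX_sub y hy]

-- The summand `#S - 1` is truncated at `S = ∅`, which accounts for the `+ 1`.
lemma sum_powerset_card_sub_one_add_two_pow {β : Type*} (X : Finset β) :
    ∑ S ∈ X.powerset, (#S - 1) + 2 ^ #X = #X * 2 ^ (#X - 1) + 1 := by
  have hcard : ∑ S ∈ X.powerset, #S = #X * 2 ^ (#X - 1) := by
    rw [sum_powerset_apply_card fun j => j, ← Nat.sum_range_mul_choose]
    simp only [smul_eq_mul, mul_comm]
  classical
  have hterm : ∀ S : Finset β, #S - 1 + 1 = #S + if S = ∅ then 1 else 0 := by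
    intro S
    rcases S.eq_empty_or_nonempty with rfl | hS
    · simp
    · have := hS.card_pos
      simp only [hS.ne_empty, if_false]
      omega
  calc ∑ S ∈ X.powerset, (#S - 1) + 2 ^ #X = ∑ S ∈ X.powerset, (#S - 1 + 1) := by
        rw [sum_add_distrib, sum_const, card_powerset, smul_eq_mul, mul_one]
    _ = #X * 2 ^ (#X - 1) + 1 := by
        simp only [hterm, sum_add_distrib, hcard, sum_ite_eq', empty_mem_powerset, if_true]

lemma IsTransversal.card_add_sum_card_inter_sub_one_le (h : IsTransversal 𝒜 X) :
    #𝒜 + ∑ A ∈ 𝒜, (#(X ∩ A) - 1) ≤ ∑ A ∈ 𝒜, #(X ∩ A) + 1 := by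
  have hterm : ∀ A ∈ 𝒜, 1 + (#(X ∩ A) - 1) ≤ #(X ∩ A) + if A = ∅ then 1 else 0 := by
    intro A hA
    rcases A.eq_empty_or_nonempty with rfl | hAne
    · simp
    · have := (h A hA hAne).card_pos
      omega
  calc #𝒜 + ∑ A ∈ 𝒜, (#(X ∩ A) - 1) = ∑ A ∈ 𝒜, (1 + (#(X ∩ A) - 1)) := by
        rw [sum_add_distrib, card_eq_sum_ones]
    _ ≤ ∑ A ∈ 𝒜, (#(X ∩ A) + if A = ∅ then 1 else 0) := sum_le_sum hterm
    _ ≤ ∑ A ∈ 𝒜, #(X ∩ A) + 1 := by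
        rw [sum_add_distrib, sum_ite_eq']
        split_ifs <;> omega

lemma sum_powerset_add_mul_le_sum_inter (f : Finset α → ℕ) {k : ℕ} (hf : f ∅ = 0)
    (htrace : ∀ S ⊆ X, S.Nonempty → ∃ A ∈ 𝒜, X ∩ A = S) (hk : k < #{A ∈ 𝒜 | X ∩ A = X}) :
    ∑ S ∈ X.powerset, f S + k * f X ≤ ∑ A ∈ 𝒜, f (X ∩ A) := by
  have hterm : ∀ S ∈ X.powerset,
      f S + (if S = X then k * f X else 0) ≤ #{A ∈ 𝒜 | X ∩ A = S} * f S := by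
    intro S hS
    split_ifs with hSX
    · subst hSX
      calc f S + k * f S = (k + 1) * f S := by ring
        _ ≤ #{A ∈ 𝒜 | S ∩ A = S} * f S := Nat.mul_le_mul_right _ hk
    · rcases S.eq_empty_or_nonempty with rfl | hne
      · simp [hf]
      · obtain ⟨A, hA, hAS⟩ := htrace S (mem_powerset.1 hS) hne
        exact Nat.le_mul_of_pos_left _ (card_pos.2 ⟨A, mem_filter.2 ⟨hA, hAS⟩⟩)
  calc ∑ S ∈ X.powerset, f S + k * f X
      = ∑ S ∈ X.powerset, (f S + if S = X then k * f X else 0) := by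
        rw [sum_add_distrib, sum_ite_eq', if_pos (mem_powerset_self X)]
    _ ≤ ∑ S ∈ X.powerset, #{A ∈ 𝒜 | X ∩ A = S} * f S := sum_le_sum hterm
    _ = ∑ A ∈ 𝒜, f (X ∩ A) := by
        rw [← sum_fiberwise_of_maps_to' (t := X.powerset) (g := (X ∩ ·))
          fun A _ => mem_powerset.2 inter_subset_left]
        simp only [sum_const, smul_eq_mul]

theorem UnionClosed.exists_card_add_le_sum_card_membersContaining (h : UnionClosed 𝒜)
    (hsep : Separating 𝒜) (hU : (𝒜.sup id).Nonempty) :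
    ∃ X ⊆ 𝒜.sup id, X.Nonempty ∧
      #𝒜 + #X * 2 ^ (#X - 1) + #(𝒜.sup id \ X) * (#X - 1) ≤
        ∑ x ∈ X, #(membersContaining 𝒜 x) + 2 ^ #X := by
  obtain ⟨X, hmin, hmax⟩ := exists_minimal_isTransversal_maximalFor 𝒜
  have hne : X.Nonempty := hmin.prop.nonempty hU
  have htraces : ∑ S ∈ X.powerset, (#S - 1) + #(𝒜.sup id \ X) * (#X - 1) ≤
      ∑ A ∈ 𝒜, (#(X ∩ A) - 1) :=
    sum_powerset_add_mul_le_sum_inter (fun S => #S - 1) rfl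
      (fun S hSX hS =>
        h.exists_inter_eq (fun x => exists_inter_eq_singleton_of_minimal hmin) hS hSX)
      (h.card_sdiff_lt_card_filter_inter_eq hsep hmax hne)
  have hpowerset := sum_powerset_card_sub_one_add_two_pow X
  have hmembers := hmin.prop.card_add_sum_card_inter_sub_one_le
  rw [sum_card_inter_eq_sum_card_membersContaining] at hmembers
  exact ⟨X, fun x hx => (hmax x hx).prop, hne, by omega⟩

lemma UnionClosed.exists_excess_le_of_forall_two_mul_card_lt (h : UnionClosed 𝒜)
    (hsep : Separating 𝒜) (hU : (𝒜.sup id).Nonempty)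
    (hrare : ∀ x ∈ 𝒜.sup id, 2 * #(membersContaining 𝒜 x) < #𝒜) :
    ∃ q : ℕ, ((#(𝒜.sup id) : ℝ) - 1) + q * (#(𝒜.sup id) + 2 ^ (q + 1) - q - 3) ≤
      q * ((#𝒜 - 1) / 2) := by
  obtain ⟨X, hXU, hne, hX⟩ := h.exists_card_add_le_sum_card_membersContaining hsep hU
  have hsum : 2 * ∑ x ∈ X, #(membersContaining 𝒜 x) + #X ≤ #X * #𝒜 := by
    rw [mul_sum, card_eq_sum_ones X, ← sum_add_distrib, ← card_eq_sum_ones, ← smul_eq_mul]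
    exact sum_le_card_nsmul _ _ _ fun x hx => hrare x (hXU hx)
  have hcard_ne_one : #X ≠ 1 := by
    intro hcard
    obtain ⟨x, rfl⟩ := card_eq_one.1 hcard
    have hx := hXU (mem_singleton_self x)
    have hpos := (membersContaining_nonempty hx).card_pos
    have := hrare x hx
    simp only [card_singleton, sum_singleton] at hX
    omega
  have hsdiff : #(𝒜.sup id \ X) + #X = #(𝒜.sup id) := card_sdiff_add_card_eq_card hXU
  obtain ⟨q, hq⟩ : ∃ q, #X = q + 2 := ⟨#X - 2, by have := hne.card_pos; omega⟩
  refine ⟨q, ?_⟩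
  rw [hq] at hX hsum hsdiff
  rw [show q + 2 - 1 = q + 1 from rfl, pow_succ 2 (q + 1)] at hX
  rify at hX hsum hsdiff
  rw [← hsdiff]
  linarith

lemma UnionClosed.exists_le_card_of_forall_two_mul_card_lt (h : UnionClosed 𝒜)
    (hsep : Separating 𝒜) (hU : 2 ≤ #(𝒜.sup id))
    (hrare : ∀ x ∈ 𝒜.sup id, 2 * #(membersContaining 𝒜 x) < #𝒜) :
    ∃ q : ℕ, 1 ≤ q ∧
      2 * (#(𝒜.sup id) + (((#(𝒜.sup id) : ℝ) - 1) / q + 2 ^ (q + 1) - q - 3)) + 1 ≤ #𝒜 := by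
  obtain ⟨q, hexcess⟩ :=
    h.exists_excess_le_of_forall_two_mul_card_lt hsep (card_pos.1 (by omega)) hrare
  have hq : q ≠ 0 := by
    rintro rfl
    have : (2 : ℝ) ≤ #(𝒜.sup id) := by exact_mod_cast hU
    norm_num at hexcess
    linarith
  refine ⟨q, Nat.one_le_iff_ne_zero.2 hq, ?_⟩
  have hdiv : ((#(𝒜.sup id) : ℝ) - 1) / q ≤
      (#𝒜 - 1) / 2 - (#(𝒜.sup id) + 2 ^ (q + 1) - q - 3) := by
    rw [div_le_iff₀ (by positivity)]
    linarith
  linarith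

end Family

section Logarithm

variable {x : ℝ}

lemma nine_fifths_mul_le_two_rpow (s : ℝ) : 9 / 5 * s ≤ 2 ^ s := by
  -- The tangent line of `2 ^ s` through the origin has slope `e * log 2 ≈ 1.88`.
  have htangent : rexp 1 * (log 2 * s) ≤ 2 ^ s := by
    rw [rpow_def_of_pos two_pos, ← sub_add_cancel (log 2 * s) 1, exp_add, mul_comm]
    exact mul_le_mul_of_nonneg_right (by linarith [add_one_le_exp (log 2 * s - 1)])
      (exp_pos 1).le
  rcases le_total s 0 with hs | hs
  · linarith [rpow_pos_of_pos two_pos s]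
  · have hconst : 9 / 5 ≤ rexp 1 * log 2 := by nlinarith [exp_one_gt_d9, log_two_gt_d9]
    nlinarith

lemma four_ninths_mul_le_sub_logb {L : ℝ} (hL : 0 < L) : 4 / 9 * L ≤ L - logb 2 L := by
  have h := nine_fifths_mul_le_two_rpow (logb 2 L)
  rw [rpow_logb two_pos (by norm_num) hL] at h
  linarith

lemma two_rpow_logb_sub_logb_logb (hx : 1 < x) :
    (2 : ℝ) ^ (logb 2 x - logb 2 (logb 2 x)) = x / logb 2 x := by
  have hL : 0 < logb 2 x := logb_pos one_lt_two hx
  rw [rpow_sub two_pos, rpow_logb two_pos (by norm_num) (by linarith),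
    rpow_logb two_pos (by norm_num) hL]

lemma div_logb_sub_logb_logb_le (hx : 1 < x) {q : ℝ} (hq : 0 < q) :
    x / (logb 2 x - logb 2 (logb 2 x)) ≤ (x + 5 / 4 * 2 ^ q) / q := by
  have hpow := two_rpow_logb_sub_logb_logb hx
  have hL : 0 < logb 2 x := logb_pos one_lt_two hx
  have hg := four_ninths_mul_le_sub_logb hL
  set g := logb 2 x - logb 2 (logb 2 x)
  have hgpos : 0 < g := by linarith
  have hgap : 9 / 5 * (q - g) * x ≤ 2 ^ q * logb 2 x := by
    have h := nine_fifths_mul_le_two_rpow (q - g)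
    rw [rpow_sub two_pos, hpow, div_div_eq_mul_div, le_div_iff₀ (by linarith)] at h
    exact h
  have hLg : (2 : ℝ) ^ q * logb 2 x ≤ 2 ^ q * (9 / 4 * g) := by
    gcongr
    linarith
  rw [div_le_div_iff₀ hgpos hq]
  linarith

lemma div_logb_sub_logb_logb_lt (hx : 6 ≤ x) :
    x / (logb 2 x - logb 2 (logb 2 x)) < x - 1 / 2 := by
  have hL : 5 / 2 ≤ logb 2 x := by
    have h : logb 2 ((2 : ℝ) ^ 5) ≤ logb 2 (x ^ 2) :=
      logb_le_logb_of_le one_lt_two (by norm_num) (by nlinarith)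
    rw [logb_pow, logb_pow, logb_self_eq_one one_lt_two] at h
    norm_num at h
    linarith
  have hg := four_ninths_mul_le_sub_logb (by linarith : 0 < logb 2 x)
  rw [div_lt_iff₀ (by linarith)]
  nlinarith

lemma div_logb_sub_logb_logb_sub_half_lt (hx : 6 ≤ x) {q : ℕ} (hq : 1 ≤ q) :
    x / (logb 2 x - logb 2 (logb 2 x)) - 1 / 2 < (x - 1) / q + 2 ^ (q + 1) - q - 3 := by
  obtain rfl | hq2 := hq.eq_or_lt
  · have := div_logb_sub_logb_logb_lt hx
    norm_num
    linarith
  have hqR : (2 : ℝ) ≤ q := by exact_mod_cast hq2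
  have hpow : (q : ℝ) + 2 ≤ 2 ^ q := by
    obtain ⟨k, rfl⟩ := Nat.exists_eq_add_of_le' hq2
    have : k + 2 + 2 ≤ 2 ^ (k + 2) := by
      have := k.lt_two_pow_self
      rw [pow_add]
      omega
    exact_mod_cast this
  have hbound := div_logb_sub_logb_logb_le (x := x) (by linarith) (by linarith : (0 : ℝ) < q)
  rw [rpow_natCast] at hbound
  have hsplit : (x + 5 / 4 * 2 ^ q) / q = (x - 1) / q + (5 / 4 * 2 ^ q + 1) / q := by ring
  have hrest : (5 / 4 * 2 ^ q + 1) / (q : ℝ) ≤ (5 / 4 * 2 ^ q + 1) / 2 := by gcongr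
  rw [pow_succ]
  linarith

end Logarithm

theorem main_theorem_general (𝒜 : Finset (Finset α))
    (huc : UnionClosed 𝒜) (hsep : Separating 𝒜)
    (m : ℕ) (hm : (𝒜.sup id).card = m) (hm6 : 6 ≤ m)
    (hcard : (𝒜.card : ℝ) ≤
      2 * ((m : ℝ) + m / (logb 2 m - logb 2 (logb 2 m)))) :
    ∃ x ∈ 𝒜.sup id, 2 * (𝒜.filter (fun A => x ∈ A)).card ≥ 𝒜.card := by
  by_contra! hrare
  subst hm
  obtain ⟨q, hq, hlower⟩ :=
    huc.exists_le_card_of_forall_two_mul_card_lt hsep (by omega) hrare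
  have hnum := div_logb_sub_logb_logb_sub_half_lt (x := (𝒜.sup id).card) (by exact_mod_cast hm6) hq
  linarith

theorem main_theorem (𝒜 : Finset (Finset α))
    (huc : UnionClosed 𝒜) (hsep : Separating 𝒜)
    (m : ℕ) (hm : (𝒜.sup id).card = m) (hm13 : 13 ≤ m)
    (hcard : (𝒜.card : ℝ) ≤
      2 * ((m : ℝ) + m / (logb 2 m - logb 2 (logb 2 m)))) :
    ∃ x ∈ 𝒜.sup id, 2 * (𝒜.filter (fun A => x ∈ A)).card ≥ 𝒜.card :=
  main_theorem_general 𝒜 huc hsep m hm (by omega) hcard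
end
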